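/- arXiv:2207.05048 — 5 statements merged into one kernel-verified Lean document; each statement's English description precedes it below -/
import Mathlib

section
/- Let n and C be positive integers, let 0 < γ < 1, and let M be a collection of pairwise disjoint C-element subsets of {1, …, n} which together cover at least (1 − γ)n elements. If S ⊆ {1, …, n} has size |S| ≥ 4γn, then there exist at least |S|/(2C) sets h ∈ M with |h ∩ S| ≥ γC/2. -/
/-!
The proof is double counting. Let `V` be the set of covered vertices. At most `γn ≤ |S|/4` vertices
are uncovered, so `|S ∩ V| ≥ 3|S|/4`. Since the members of `M` are disjoint, `|S ∩ V|` is the sum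
of `|h ∩ S|` over `h ∈ M`. Call `h` good if `|h ∩ S| ≥ γC/2`. A good `h` contributes at most `C`,
and the others contribute at most `|M| · γC/2 ≤ γn/2 ≤ |S|/8` in total. Hence
`C · #good ≥ 3|S|/4 - |S|/8 ≥ |S|/2`.
-/

/-- **Almost perfect matchings hit large sets (Lemma "proportion of A").**
Let `M` be a matching of `C`-element subsets of `{1, …, n}` covering at least `(1−γ)n`
vertices. If `S ⊆ {1, …, n}` has `|S| ≥ 4γn`, then at least `|S|/(2C)` of the sets
`h ∈ M` satisfy `|h ∩ S| ≥ γC/2`. -/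
theorem matching_edges_meeting_large_set (n C : ℕ) (hn : 0 < n) (hC : 0 < C)
    (γ : ℝ) (hγ0 : 0 < γ) (hγ1 : γ < 1)
    (M : Finset (Finset (Fin n)))
    (hsize : ∀ h ∈ M, h.card = C)
    (hdisj : (M : Set (Finset (Fin n))).Pairwise fun a b => Disjoint a b)
    (hcover : (1 - γ) * (n : ℝ) ≤ ((M.biUnion id).card : ℝ))
    (S : Finset (Fin n)) (hS : 4 * γ * (n : ℝ) ≤ (S.card : ℝ)) :
    (S.card : ℝ) / (2 * C) ≤
      (({h | h ∈ M ∧ γ * C / 2 ≤ ((h ∩ S).card : ℝ)} : Set (Finset (Fin n))).ncard : ℝ) := by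
  classical
  set V := M.biUnion id with hV
  set G := M.filter (fun h => γ * C / 2 ≤ ((h ∩ S).card : ℝ)) with hG
  have hset : ({h | h ∈ M ∧ γ * C / 2 ≤ ((h ∩ S).card : ℝ)} : Set (Finset (Fin n))) = ↑G := by
    ext h
    simp [hG]
  rw [hset, Set.ncard_coe_finset]
  have hVcard : V.card = M.card * C := by
    rw [hV, Finset.card_biUnion (t := id) hdisj]
    exact Finset.sum_const_nat hsize
  have hVn : V.card ≤ n := by simpa using Finset.card_le_univ V
  have hMC : (M.card : ℝ) * C ≤ n := by exact_mod_cast hVcard ▸ hVn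
  have hVS : ((V ∩ S).card : ℝ) = ∑ h ∈ M, ((h ∩ S).card : ℝ) := by
    rw [hV, Finset.biUnion_inter, Finset.card_biUnion]
    · simp
    · intro a ha b hb hab
      exact (hdisj ha hb hab).mono Finset.inter_subset_left Finset.inter_subset_left
  have hS_le : (S.card : ℝ) + V.card ≤ (V ∩ S).card + n := by
    have h1 := Finset.card_union_add_card_inter V S
    have h2 : (V ∪ S).card ≤ n := by simpa using Finset.card_le_univ (V ∪ S)
    exact_mod_cast (by omega : S.card + V.card ≤ (V ∩ S).card + n)
  -- The term `γC/2` is charged to every `h ∈ M`; good `h` are charged `C` on top of it.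
  have hsum : ∑ h ∈ M, ((h ∩ S).card : ℝ) ≤ G.card * C + M.card * (γ * C / 2) := by
    calc ∑ h ∈ M, ((h ∩ S).card : ℝ)
        ≤ ∑ h ∈ M, ((if γ * C / 2 ≤ ((h ∩ S).card : ℝ) then (C : ℝ) else 0) + γ * C / 2) := by
          refine Finset.sum_le_sum fun h hh => ?_
          split_ifs with hgood
          · have h1 : ((h ∩ S).card : ℝ) ≤ C := by
              exact_mod_cast (Finset.card_le_card Finset.inter_subset_left).trans (hsize h hh).le
            have : 0 ≤ γ * C / 2 := by positivity
            linarith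
          · linarith
      _ = G.card * C + M.card * (γ * C / 2) := by
          rw [Finset.sum_add_distrib, ← Finset.sum_filter, Finset.sum_const, Finset.sum_const,
            nsmul_eq_mul, nsmul_eq_mul]
  have hCpos : (0 : ℝ) < C := by exact_mod_cast hC
  have hγMC : γ * (M.card * C) ≤ γ * n := mul_le_mul_of_nonneg_left hMC hγ0.le
  rw [div_le_iff₀ (by positivity)]
  have hSnn : (0 : ℝ) ≤ S.card := by positivity
  linarith
end

section
/- For every integer t ≥ 2 and every 0 < β < 1 there exists ρ₀ > 0 such that for every 0 < ρ ≤ ρ₀ there exists C₀ such that for every integer C ≥ C₀ there exists n₀ such that the following holds for all n ≥ n₀. Let 𝒮 be a partition of the edge set of the complete graph on the vertex set {1, …, n} into edge-disjoint cliques, each on exactly C vertices, and suppose each block B ∈ 𝒮 has an associated subset B₀ ⊆ B of its vertex set with |B₀| ≥ (1 − ρ)C. Then for every partition of {1, …, n} into sets V₁, …, V_t whose sizes pairwise differ by at most 1, at least (1 − β)|𝒮| of the blocks B ∈ 𝒮 have the property that at least (1 − β)t of the sets Vᵢ satisfy |B₀ ∩ Vᵢ| ≥ C/(200t). -/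
/-!
The proof is a second moment argument, and it shows slightly more than is claimed: all but a
`β`-fraction of the blocks meet *every* part `Vᵢ` in at least `C / (200 t)` vertices of `B₀`.

Every vertex lies in `r = (n - 1) / (C - 1)` blocks (`degree_mul`). For a vertex set `V` of size `m`
put `X_B = |V ∩ B|`. Double counting incidences and pairs gives `∑ X_B = m r`
(`sum_card_inter_real`) and `∑ X_B² = m (m - 1 + r)` (`sum_card_inter_sq`), so with the mean
`μ = C m / n` the total variance is `∑ (X_B - μ)² ≤ m r = μ |𝒮|`. By Chebyshev's inequality at most
`4 |𝒮| / μ` blocks have `X_B ≤ μ / 2` (`card_sparse_mul_le`).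

An equipartition has `|Vᵢ| ≥ n / (2 t)`, hence `μ ≥ C / (2 t)`, as soon as `n ≥ 2 t`. If
`ρ ≤ 1 / (200 t)`, a block with `|B₀ ∩ Vᵢ| < C / (200 t)` has `|B ∩ Vᵢ| < C / (100 t) ≤ μ / 2`. A
union bound over the `t` parts leaves at most `8 t² |𝒮| / C ≤ β |𝒮|` bad blocks once
`C ≥ 8 t² / β`.
-/

section NicelyDistributed

variable {n C : ℕ} {S : Finset (Finset (Fin n))}

lemma card_filter_pair (h : ∀ u v : Fin n, u ≠ v → ∃! B, B ∈ S ∧ u ∈ B ∧ v ∈ B)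
    {u v : Fin n} (huv : u ≠ v) : ((S.filter (u ∈ ·)).filter (v ∈ ·)).card = 1 := by
  obtain ⟨B, hB, huniq⟩ := h u v huv
  rw [Finset.card_eq_one]
  refine ⟨B, ?_⟩
  ext D
  simp only [Finset.mem_filter, Finset.mem_singleton]
  constructor
  · rintro ⟨⟨h1, h2⟩, h3⟩
    exact huniq D ⟨h1, h2, h3⟩
  · rintro rfl
    exact ⟨⟨hB.1, hB.2.1⟩, hB.2.2⟩

/-- The blocks through `x` cover every other point exactly once. -/
lemma sum_card_erase_inter (h : ∀ u v : Fin n, u ≠ v → ∃! B, B ∈ S ∧ u ∈ B ∧ v ∈ B)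
    (x : Fin n) (V : Finset (Fin n)) :
    ∑ B ∈ S.filter (x ∈ ·), (V.erase x ∩ B).card = (V.erase x).card := by
  rw [Finset.sum_card_inter (n := 1), mul_one]
  intro a ha
  exact card_filter_pair h (Finset.ne_of_mem_erase ha).symm

lemma degree_mul (hC : ∀ B ∈ S, B.card = C)
    (h : ∀ u v : Fin n, u ≠ v → ∃! B, B ∈ S ∧ u ∈ B ∧ v ∈ B) (x : Fin n) :
    ((S.filter (x ∈ ·)).card : ℝ) * ((C : ℝ) - 1) = (n : ℝ) - 1 := by
  have h1 := sum_card_erase_inter h x Finset.univ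
  have h2 : ∀ B ∈ S.filter (x ∈ ·), (((Finset.univ.erase x ∩ B).card : ℕ) : ℝ) = (C : ℝ) - 1 := by
    intro B hB
    rw [Finset.mem_filter] at hB
    have : Finset.univ.erase x ∩ B = B.erase x := by
      ext y; simp
    rw [this, Finset.cast_card_erase_of_mem hB.2, hC B hB.1]
  have h3 := congrArg (Nat.cast : ℕ → ℝ) h1
  rw [Nat.cast_sum, Finset.sum_congr rfl h2, Finset.cast_card_erase_of_mem (Finset.mem_univ x),
    Finset.sum_const, nsmul_eq_mul] at h3
  simpa using h3

lemma degree_eq (hC2 : 2 ≤ C) (hC : ∀ B ∈ S, B.card = C)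
    (h : ∀ u v : Fin n, u ≠ v → ∃! B, B ∈ S ∧ u ∈ B ∧ v ∈ B) (x : Fin n) :
    ((S.filter (x ∈ ·)).card : ℝ) = ((n : ℝ) - 1) / ((C : ℝ) - 1) := by
  have : (2 : ℝ) ≤ C := by exact_mod_cast hC2
  rw [eq_div_iff (by linarith)]
  exact degree_mul hC h x

lemma sum_weighted (V : Finset (Fin n)) (f : Finset (Fin n) → ℝ) :
    ∑ B ∈ S, ((V ∩ B).card : ℝ) * f B = ∑ x ∈ V, ∑ B ∈ S.filter (x ∈ ·), f B := by
  simp_rw [Finset.sum_filter]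
  rw [Finset.sum_comm]
  refine Finset.sum_congr rfl fun B _ => ?_
  rw [← Finset.sum_filter, Finset.sum_const, nsmul_eq_mul, Finset.filter_mem_eq_inter]

lemma sum_card_inter_real (hC2 : 2 ≤ C) (hC : ∀ B ∈ S, B.card = C)
    (h : ∀ u v : Fin n, u ≠ v → ∃! B, B ∈ S ∧ u ∈ B ∧ v ∈ B) (V : Finset (Fin n)) :
    ∑ B ∈ S, ((V ∩ B).card : ℝ) = V.card * (((n : ℝ) - 1) / ((C : ℝ) - 1)) := by
  have := sum_weighted (S := S) V (fun _ => 1)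
  simp only [mul_one, Finset.sum_const, nsmul_eq_mul, degree_eq hC2 hC h] at this
  exact this

lemma sum_card_inter_sq (hC2 : 2 ≤ C) (hC : ∀ B ∈ S, B.card = C)
    (h : ∀ u v : Fin n, u ≠ v → ∃! B, B ∈ S ∧ u ∈ B ∧ v ∈ B) (V : Finset (Fin n)) :
    ∑ B ∈ S, ((V ∩ B).card : ℝ) ^ 2
      = V.card * ((V.card : ℝ) - 1 + ((n : ℝ) - 1) / ((C : ℝ) - 1)) := by
  simp_rw [pow_two]
  rw [sum_weighted V (fun B => ((V ∩ B).card : ℝ))]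
  have key : ∀ x ∈ V, ∑ B ∈ S.filter (x ∈ ·), ((V ∩ B).card : ℝ)
      = (V.card : ℝ) - 1 + ((n : ℝ) - 1) / ((C : ℝ) - 1) := by
    intro x hx
    have h1 : ∀ B ∈ S.filter (x ∈ ·), ((V ∩ B).card : ℝ) = ((V.erase x ∩ B).card : ℝ) + 1 := by
      intro B hB
      rw [Finset.mem_filter] at hB
      rw [Finset.erase_inter, Finset.cast_card_erase_of_mem (Finset.mem_inter.2 ⟨hx, hB.2⟩)]
      ring
    rw [Finset.sum_congr rfl h1, Finset.sum_add_distrib, ← Nat.cast_sum,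
      sum_card_erase_inter h x V, Finset.cast_card_erase_of_mem hx, Finset.sum_const,
      nsmul_eq_mul, mul_one, degree_eq hC2 hC h]
  rw [Finset.sum_congr rfl key, Finset.sum_const, nsmul_eq_mul]

lemma card_blocks_mul (hC2 : 2 ≤ C) (hC : ∀ B ∈ S, B.card = C)
    (h : ∀ u v : Fin n, u ≠ v → ∃! B, B ∈ S ∧ u ∈ B ∧ v ∈ B) :
    (S.card : ℝ) * C = n * (((n : ℝ) - 1) / ((C : ℝ) - 1)) := by
  have h1 := sum_card_inter_real hC2 hC h Finset.univ
  have h2 : ∀ B ∈ S, (((Finset.univ ∩ B).card : ℕ) : ℝ) = C := by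
    intro B hB
    rw [Finset.univ_inter, hC B hB]
  rw [Finset.sum_congr rfl h2] at h1
  simpa using h1

/-- Chebyshev's inequality for `|V ∩ B|` over a uniformly random block `B`, whose mean is
`μ = C |V| / n` and whose variance is at most `μ`. -/
lemma card_sparse_mul_le (hC2 : 2 ≤ C) (hCn : C ≤ n) (hC : ∀ B ∈ S, B.card = C)
    (h : ∀ u v : Fin n, u ≠ v → ∃! B, B ∈ S ∧ u ∈ B ∧ v ∈ B) (V : Finset (Fin n))
    (hV : 0 < V.card) :
    ((S.filter fun B => ((V ∩ B).card : ℝ) ≤ C * V.card / n / 2).card : ℝ) * (C * V.card / n)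
      ≤ 4 * S.card := by
  have hC2' : (2 : ℝ) ≤ C := by exact_mod_cast hC2
  have hCn' : (C : ℝ) ≤ n := by exact_mod_cast hCn
  have hm : (0 : ℝ) < V.card := by exact_mod_cast hV
  have hs1 := sum_card_inter_real hC2 hC h V
  have hs2 := sum_card_inter_sq hC2 hC h V
  have hb := card_blocks_mul hC2 hC h
  set m : ℝ := (V.card : ℝ)
  set b : ℝ := (S.card : ℝ)
  set r : ℝ := ((n : ℝ) - 1) / ((C : ℝ) - 1) with hr
  set μ : ℝ := C * m / n with hμ
  have hn0 : (0 : ℝ) < n := by linarith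
  have hμ0 : 0 < μ := by positivity
  have hμb : μ * b = m * r := by
    rw [hμ, div_mul_eq_mul_div, div_eq_iff hn0.ne']
    linear_combination m * hb
  -- This is `C (n - 1) ≥ (C - 1) n`, that is, `C ≤ n`.
  have hrn : m ≤ μ * r := by
    rw [hμ, hr, div_mul_div_comm, le_div_iff₀ (mul_pos hn0 (by linarith))]
    nlinarith
  have hvar : ∑ B ∈ S, (((V ∩ B).card : ℝ) - μ) ^ 2 ≤ μ * b := by
    have : ∑ B ∈ S, (((V ∩ B).card : ℝ) - μ) ^ 2
        = m * (m - 1 + r) - 2 * μ * (m * r) + b * μ ^ 2 := by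
      rw [← hs2, ← hs1, Finset.mul_sum, ← Finset.sum_sub_distrib, ← nsmul_eq_mul,
        ← Finset.sum_const, ← Finset.sum_add_distrib]
      exact Finset.sum_congr rfl fun B _ => by ring
    rw [this]
    have e : b * μ ^ 2 = μ * (m * r) := by rw [← hμb]; ring
    have := mul_le_mul_of_nonneg_left hrn hm.le
    rw [e, hμb]
    nlinarith
  have hlow : ((S.filter fun B => ((V ∩ B).card : ℝ) ≤ μ / 2).card : ℝ) * (μ / 2) ^ 2
      ≤ ∑ B ∈ S, (((V ∩ B).card : ℝ) - μ) ^ 2 := by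
    rw [← nsmul_eq_mul, ← Finset.sum_const]
    refine (Finset.sum_le_sum fun B hB => ?_).trans
      (Finset.sum_le_sum_of_subset_of_nonneg (Finset.filter_subset _ S) fun _ _ _ => sq_nonneg _)
    have := (Finset.mem_filter.1 hB).2
    nlinarith
  refine le_of_mul_le_mul_right ?_ hμ0
  nlinarith

end NicelyDistributed


/-- **Nicely distributed blocks (Lemma on Steiner systems and equipartitions).**
For every `t ≥ 2` and `0 < β < 1` there is `ρ₀ > 0` such that for every `0 < ρ ≤ ρ₀`
there is `C₀` such that for every `C ≥ C₀` there is `n₀` such that for all `n ≥ n₀`: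
given a partition `𝒮` of the edges of `K_n` into cliques of size `C` (a Steiner system
`S(2,C,n)`) with associated subsets `B₀ ⊆ B`, `|B₀| ≥ (1−ρ)C`, and any equipartition
`V₁, …, V_t` of `{1, …, n}`, at least `(1−β)|𝒮|` blocks `B` have at least `(1−β)t`
parts `Vᵢ` with `|B₀ ∩ Vᵢ| ≥ C/(200t)`. -/
theorem nicely_distributed_blocks (t : ℕ) (ht : 2 ≤ t) (β : ℝ) (hβ0 : 0 < β) (hβ1 : β < 1) :
    ∃ ρ₀ : ℝ, 0 < ρ₀ ∧ ∀ ρ : ℝ, 0 < ρ → ρ ≤ ρ₀ →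
    ∃ C₀ : ℕ, ∀ C : ℕ, C₀ ≤ C →
    ∃ n₀ : ℕ, ∀ n : ℕ, n₀ ≤ n →
    ∀ 𝒮 : Finset (Finset (Fin n)),
      (∀ B ∈ 𝒮, B.card = C) →
      (∀ u v : Fin n, u ≠ v → ∃! B, B ∈ 𝒮 ∧ u ∈ B ∧ v ∈ B) →
    ∀ B₀ : Finset (Fin n) → Finset (Fin n),
      (∀ B ∈ 𝒮, B₀ B ⊆ B ∧ (1 - ρ) * (C : ℝ) ≤ ((B₀ B).card : ℝ)) →
    ∀ P : Fin t → Finset (Fin n),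
      (Pairwise fun i j => Disjoint (P i) (P j)) →
      (∀ x : Fin n, ∃ i, x ∈ P i) →
      (∀ i j, (P i).card ≤ (P j).card + 1) →
    (1 - β) * (𝒮.card : ℝ) ≤
      (({B | B ∈ 𝒮 ∧ (1 - β) * (t : ℝ) ≤
          (({i : Fin t | (C : ℝ) / (200 * t) ≤ (((B₀ B) ∩ P i).card : ℝ)}).ncard : ℝ)}
        : Set (Finset (Fin n))).ncard : ℝ) := by
  classical
  have ht' : (2 : ℝ) ≤ t := by exact_mod_cast ht
  have ht0 : (0 : ℝ) < t := by linarith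
  refine ⟨1 / (200 * t), by positivity, fun ρ _ hρ => ⟨⌈8 * (t : ℝ) ^ 2 / β⌉₊ + 2, fun C hC0 =>
    ⟨C + 2 * t, fun n hn 𝒮 hC h B₀ hB₀ P hdisj hcov heq => ?_⟩⟩⟩
  have hC2 : 2 ≤ C := by omega
  have hCβ : 8 * (t : ℝ) ^ 2 ≤ β * C := by
    have h1 : (⌈8 * (t : ℝ) ^ 2 / β⌉₊ : ℝ) ≤ C := Nat.cast_le.2 (by omega)
    have h2 := (Nat.le_ceil _).trans h1
    rw [div_le_iff₀ hβ0] at h2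
    linarith
  have hCpos : (0 : ℝ) < C := by
    have : 0 < C := by omega
    exact_mod_cast this
  have hn' : (2 : ℝ) * t ≤ n := by exact_mod_cast (by omega : 2 * t ≤ n)
  have hn0 : (0 : ℝ) < n := by linarith
  have hP : ∀ i, (n : ℝ) / (2 * t) ≤ (P i).card := by
    intro i
    have h1 : n ≤ t * ((P i).card + 1) := by
      calc n = (Finset.univ.biUnion P).card := by
            have : Finset.univ.biUnion P = Finset.univ := by
              ext x; simpa using hcov x
            rw [this]; simp
        _ ≤ ∑ j, (P j).card := Finset.card_biUnion_le
        _ ≤ ∑ _j : Fin t, ((P i).card + 1) := Finset.sum_le_sum fun j _ => heq j i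
        _ = t * ((P i).card + 1) := by simp
    have h2 : (n : ℝ) ≤ t * ((P i).card + 1) := by exact_mod_cast h1
    rw [div_le_iff₀ (by positivity)]
    nlinarith
  have hμ : ∀ i, (C : ℝ) / (2 * t) ≤ C * (P i).card / n := by
    intro i
    rw [le_div_iff₀ hn0]
    calc (C : ℝ) / (2 * t) * n = C * (n / (2 * t)) := by ring
      _ ≤ C * (P i).card := by gcongr; exact hP i
  set bad : Fin t → Finset (Finset (Fin n)) := fun i =>
    𝒮.filter fun B => ((P i ∩ B).card : ℝ) ≤ C * (P i).card / n / 2 with hbad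
  have hbadcard : ∀ i, ((bad i).card : ℝ) ≤ 8 * t * 𝒮.card / C := by
    intro i
    have hpos : 0 < (P i).card := by
      have : (0 : ℝ) < (P i).card := lt_of_lt_of_le (by positivity) (hP i)
      exact_mod_cast this
    have h1 := card_sparse_mul_le hC2 (by omega : C ≤ n) hC h (P i) hpos
    have h2 : ((bad i).card : ℝ) * (C / (2 * t)) ≤ 4 * 𝒮.card :=
      (mul_le_mul_of_nonneg_left (hμ i) (Nat.cast_nonneg _)).trans h1
    rw [mul_div_assoc', div_le_iff₀ (by positivity)] at h2
    rw [le_div_iff₀ hCpos]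
    linarith
  have hunion : ((Finset.univ.biUnion bad).card : ℝ) ≤ β * 𝒮.card := by
    calc ((Finset.univ.biUnion bad).card : ℝ) ≤ ∑ i, ((bad i).card : ℝ) := by
          exact_mod_cast Finset.card_biUnion_le
      _ ≤ ∑ _i : Fin t, (8 * t * 𝒮.card / C : ℝ) := Finset.sum_le_sum fun i _ => hbadcard i
      _ = 8 * (t : ℝ) ^ 2 * 𝒮.card / C := by simp; ring
      _ ≤ β * 𝒮.card := by
          rw [div_le_iff₀ hCpos]
          have := mul_le_mul_of_nonneg_right hCβ (Nat.cast_nonneg (α := ℝ) 𝒮.card)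
          linarith
  -- Outside the bad blocks every part meets `B₀` in enough vertices.
  have hgood : ∀ B ∈ 𝒮 \ Finset.univ.biUnion bad, ∀ i,
      (C : ℝ) / (200 * t) ≤ ((B₀ B ∩ P i).card : ℝ) := by
    intro B hB i
    rw [Finset.mem_sdiff] at hB
    obtain ⟨hBS, hBb⟩ := hB
    have hgt : (C : ℝ) * (P i).card / n / 2 < (P i ∩ B).card := by
      by_contra hle
      exact hBb (Finset.mem_biUnion.2
        ⟨i, Finset.mem_univ i, Finset.mem_filter.2 ⟨hBS, not_lt.1 hle⟩⟩)
    obtain ⟨hsub, hcard⟩ := hB₀ B hBS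
    have h1 : (P i ∩ B).card ≤ (B₀ B ∩ P i).card + (B \ B₀ B).card := by
      refine (Finset.card_le_card fun x hx => ?_).trans (Finset.card_union_le _ _)
      simp only [Finset.mem_inter, Finset.mem_union, Finset.mem_sdiff] at hx ⊢
      tauto
    have h1' : ((P i ∩ B).card : ℝ) ≤ (B₀ B ∩ P i).card + (B \ B₀ B).card := by
      exact_mod_cast h1
    have h2 : ((B \ B₀ B).card : ℝ) = C - (B₀ B).card := by
      rw [Finset.cast_card_sdiff hsub, hC B hBS]
    have h3 : ρ * C ≤ C / (200 * t) := by
      calc ρ * C ≤ 1 / (200 * t) * C := by gcongr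
        _ = C / (200 * t) := by ring
    have h4 : (C : ℝ) / (2 * t) = 100 * (C / (200 * t)) := by ring
    have h5 : (0 : ℝ) < C / (200 * t) := by positivity
    have := hμ i
    linarith
  have hsubset : ((𝒮 \ Finset.univ.biUnion bad : Finset (Finset (Fin n))) : Set (Finset (Fin n))) ⊆
      {B | B ∈ 𝒮 ∧ (1 - β) * (t : ℝ) ≤
          (({i : Fin t | (C : ℝ) / (200 * t) ≤ (((B₀ B) ∩ P i).card : ℝ)}).ncard : ℝ)} := by
    intro B hB
    rw [Finset.mem_coe] at hB
    refine ⟨(Finset.mem_sdiff.1 hB).1, ?_⟩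
    have : {i : Fin t | (C : ℝ) / (200 * t) ≤ (((B₀ B) ∩ P i).card : ℝ)} = Set.univ :=
      Set.eq_univ_of_forall (hgood B hB)
    rw [this, Set.ncard_univ, Nat.card_eq_fintype_card, Fintype.card_fin]
    nlinarith
  have hle := Set.ncard_le_ncard hsubset (Set.toFinite _)
  rw [Set.ncard_coe_finset] at hle
  have hle' : ((𝒮 \ Finset.univ.biUnion bad).card : ℝ) ≤ _ := Nat.cast_le.2 hle
  refine le_trans ?_ hle'
  have h1 := Finset.le_card_sdiff (Finset.univ.biUnion bad) 𝒮
  have h2 : (𝒮.card : ℝ) ≤ (𝒮 \ Finset.univ.biUnion bad).card + (Finset.univ.biUnion bad).card := by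
    exact_mod_cast (by omega)
  linarith
end

section
/- Let α > 0, let d ≥ 1 be an integer, and let G be an α-joint graph on n vertices. Then every induced subgraph of G on at least 10αdn vertices contains a non-empty subgraph H with the property that every set X ⊆ V(H) with 1 ≤ |X| ≤ αn satisfies |Γ_H(X)| ≥ d|X| (i.e., H is (αn, d)-expanding). -/
/-!
Repeatedly delete non-expanding sets from `U`. A union `B` of deleted sets still has at most `d|B|`
neighbours in `U \ B`. If the process ever pushed `|B|` past `αn`, then at that moment
`αn ≤ |B| ≤ 2αn`, so the vertices of `U` outside `B` and its neighbourhood would number at least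
`10αdn - 2αn - 2αdn ≥ αn`, and `α`-jointness would give an edge from `B` to that set: a
contradiction. The process is encoded by choosing `B` of maximal size among the sets with
`|B| ≤ αn` having few neighbours in `U \ B`; the expanding subgraph is the one induced on `U \ B`.
-/

theorem joint_graph_has_expanding_subgraph (α : ℝ) (hα : 0 < α) (d : ℕ) (hd : 1 ≤ d)
    (n : ℕ) (G : SimpleGraph (Fin n))
    (hjoint : ∀ S T : Set (Fin n), Disjoint S T → α * (n : ℝ) ≤ (S.ncard : ℝ) →
      α * (n : ℝ) ≤ (T.ncard : ℝ) → ∃ u ∈ S, ∃ v ∈ T, G.Adj u v)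
    (U : Set (Fin n)) (hU : 10 * α * (d : ℝ) * (n : ℝ) ≤ (U.ncard : ℝ)) :
    ∃ H : G.Subgraph, H.verts ⊆ U ∧ H.verts.Nonempty ∧
      ∀ X : Set (Fin n), X ⊆ H.verts → 1 ≤ X.ncard → (X.ncard : ℝ) ≤ α * (n : ℝ) →
        (d : ℝ) * (X.ncard : ℝ) ≤ (({v : Fin n | ∃ x ∈ X, H.Adj x v}).ncard : ℝ) := by
  -- For `n = 0` jointness fails for the pair `∅, ∅`.
  have hn : 0 < n := by
    rcases Nat.eq_zero_or_pos n with rfl | h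
    · obtain ⟨u, -⟩ := hjoint ∅ ∅ (by simp) (by simp) (by simp)
      exact u.elim0
    · exact h
  have hk : 0 < α * (n : ℝ) := mul_pos hα (by exact_mod_cast hn)
  have hU' : 10 * (d * (α * n)) ≤ (U.ncard : ℝ) := by linarith
  have hdk : α * n ≤ d * (α * n) := le_mul_of_one_le_left hk.le (by exact_mod_cast hd)
  clear hU
  generalize α * (n : ℝ) = k at *
  let N : Set (Fin n) → Set (Fin n) := fun B => {v | v ∈ U \ B ∧ ∃ x ∈ B, G.Adj x v}
  obtain ⟨B, ⟨hBU, hBk, hBN⟩, hmax⟩ := Set.exists_max_image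
    {B : Set (Fin n) | B ⊆ U ∧ (B.ncard : ℝ) ≤ k ∧ (N B).ncard ≤ d * B.ncard} Set.ncard
    (Set.toFinite _) ⟨∅, by simp [N, hk.le]⟩
  refine ⟨(⊤ : G.Subgraph).induce (U \ B), Set.sdiff_subset, ?_, ?_⟩
  · by_contra h
    rw [SimpleGraph.Subgraph.induce_verts, Set.not_nonempty_iff_eq_empty,
      Set.sdiff_eq_empty] at h
    have h1 : (U.ncard : ℝ) ≤ B.ncard := by exact_mod_cast Set.ncard_le_ncard h
    linarith
  · intro X hX hX1 hXk
    rw [SimpleGraph.Subgraph.induce_verts] at hX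
    by_contra! hbad
    set M := {v : Fin n | ∃ x ∈ X, ((⊤ : G.Subgraph).induce (U \ B)).Adj x v} with hM
    have hdisj : Disjoint B X :=
      Set.disjoint_left.2 fun x hxB hxX => (hX hxX).2 hxB
    have hcard : (B ∪ X).ncard = B.ncard + X.ncard := Set.ncard_union_eq hdisj
    have hsub : N (B ∪ X) ⊆ N B ∪ M := by
      rintro v ⟨⟨hvU, hvBX⟩, x, hx | hx, hxv⟩
      · exact Or.inl ⟨⟨hvU, fun h => hvBX (Or.inl h)⟩, x, hx, hxv⟩
      · exact Or.inr ⟨x, hx, by simpa using ⟨hX hx, ⟨hvU, fun h => hvBX (Or.inl h)⟩, hxv⟩⟩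
    have hMd : M.ncard < d * X.ncard := by exact_mod_cast hbad
    have hN : (N (B ∪ X)).ncard ≤ d * (B ∪ X).ncard := by
      have h1 := Set.ncard_le_ncard hsub
      have h2 := Set.ncard_union_le (N B) M
      rw [hcard, mul_add]
      omega
    have hBXU : B ∪ X ⊆ U := Set.union_subset hBU (hX.trans Set.sdiff_subset)
    have hbig : k < ((B ∪ X).ncard : ℝ) := by
      by_contra! hle
      have := hmax (B ∪ X) ⟨hBXU, hle, hN⟩
      omega
    have hsmall : ((B ∪ X).ncard : ℝ) ≤ 2 * k := by
      rw [hcard]; push_cast; linarith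
    have hNr : ((N (B ∪ X)).ncard : ℝ) ≤ d * (2 * k) := by
      calc ((N (B ∪ X)).ncard : ℝ) ≤ d * (B ∪ X).ncard := by exact_mod_cast hN
        _ ≤ d * (2 * k) := by gcongr
    have hT : (U.ncard : ℝ) ≤
        (U \ ((B ∪ X) ∪ N (B ∪ X))).ncard + ((B ∪ X).ncard + (N (B ∪ X)).ncard) := by
      have h1 := Set.ncard_le_ncard_sdiff_add_ncard U ((B ∪ X) ∪ N (B ∪ X))
      have h2 := Set.ncard_union_le (B ∪ X) (N (B ∪ X))
      exact_mod_cast h1.trans (by omega)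
    obtain ⟨u, hu, v, ⟨hvU, hv⟩, huv⟩ := hjoint (B ∪ X) (U \ ((B ∪ X) ∪ N (B ∪ X)))
      (Set.disjoint_left.2 fun x hx hx' => hx'.2 (Or.inl hx)) hbig.le (by linarith)
    exact hv (Or.inr ⟨⟨hvU, fun h => hv (Or.inl h)⟩, u, hu, huv⟩)
end

section
/- Let n, t, C′ be positive integers, let α, γ > 0 with γ ≤ α, and set β = γ/(3α). Let 𝒲 be a family of exactly γn/C′ pairwise disjoint sets, each of size C′ (so the union V(𝒲) of the members of 𝒲 has exactly γn elements). Let V be a set of size m with mt = αn such that |V(𝒲) ∩ V| ≥ βm. Then at least βm/2 of the elements of V each belong to some member I ∈ 𝒲 with |I ∩ V| ≥ C′/(12t). -/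
/-!
Elements of `V(𝒲) ∩ Vs` in no good member are covered by the traces `I ∩ Vs` of the members with
`|I ∩ Vs| < C'/(12t)`. There are at most `|𝒲| = γn/C'` such members, so these traces cover at most
`γn/(12t) = γm/(12α) = βm/4` elements. At least `βm - βm/4 ≥ βm/2` elements therefore lie
in good members.
-/

/-- **Claim: many vertices lie in members of the family intersecting `V` substantially.**
Let `𝒲` be a family of exactly `γn/C′` pairwise disjoint sets, each of size `C′` (so
their union `V(𝒲)` has exactly `γn` elements), let `Vs` be a set of size `m` with
`mt = αn` and `|V(𝒲) ∩ Vs| ≥ βm`, where `0 < γ ≤ α` and `β = γ/(3α)`. Then at least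
`βm/2` of the elements of `Vs` each belong to some `I ∈ 𝒲` with `|I ∩ Vs| ≥ C′/(12t)`. -/
theorem many_vertices_in_good_members {ι : Type} [DecidableEq ι]
    (n t C' : ℕ) (hn : 0 < n) (ht : 0 < t) (hC' : 0 < C')
    (α γ : ℝ) (hα : 0 < α) (hγ : 0 < γ) (hγα : γ ≤ α)
    (𝒲 : Finset (Finset ι))
    (hdisj : (𝒲 : Set (Finset ι)).Pairwise fun a b => Disjoint a b)
    (hsize : ∀ I ∈ 𝒲, I.card = C')
    (hcount : (𝒲.card : ℝ) = γ * (n : ℝ) / (C' : ℝ))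
    (m : ℕ) (Vs : Finset ι) (hVs : Vs.card = m)
    (hmt : ((m : ℝ) * (t : ℝ)) = α * (n : ℝ))
    (hint : γ / (3 * α) * (m : ℝ) ≤ (((𝒲.biUnion id) ∩ Vs).card : ℝ)) :
    γ / (3 * α) * (m : ℝ) / 2 ≤
      (({v | v ∈ Vs ∧ ∃ I ∈ 𝒲, v ∈ I ∧ (C' : ℝ) / (12 * (t : ℝ)) ≤ ((I ∩ Vs).card : ℝ)}
        : Set ι).ncard : ℝ) := by
  classical
  set c : ℝ := (C' : ℝ) / (12 * (t : ℝ)) with hc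
  set G : Set ι := {v | v ∈ Vs ∧ ∃ I ∈ 𝒲, v ∈ I ∧ c ≤ ((I ∩ Vs).card : ℝ)} with hG
  have hGfin : G.Finite := Vs.finite_toSet.subset fun v hv => hv.1
  set B := 𝒲.filter fun I => ((I ∩ Vs).card : ℝ) < c with hB
  have hcover : (𝒲.biUnion id) ∩ Vs ⊆ hGfin.toFinset ∪ B.biUnion fun I => I ∩ Vs := by
    intro v hv
    obtain ⟨hvW, hvV⟩ := Finset.mem_inter.1 hv
    obtain ⟨I, hI, hvI⟩ := Finset.mem_biUnion.1 hvW
    rw [Finset.mem_union]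
    rcases le_or_gt c ((I ∩ Vs).card : ℝ) with h | h
    · exact Or.inl (hGfin.mem_toFinset.2 ⟨hvV, I, hI, hvI, h⟩)
    · exact Or.inr (Finset.mem_biUnion.2
        ⟨I, Finset.mem_filter.2 ⟨hI, h⟩, Finset.mem_inter.2 ⟨hvI, hvV⟩⟩)
  have hcard : (((𝒲.biUnion id) ∩ Vs).card : ℝ) ≤ G.ncard + ∑ I ∈ B, ((I ∩ Vs).card : ℝ) := by
    have h := (Finset.card_le_card hcover).trans (Finset.card_union_le _ _)
    have h' := h.trans (Nat.add_le_add_left Finset.card_biUnion_le _)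
    rw [← Set.ncard_eq_toFinset_card G hGfin] at h'
    exact_mod_cast h'
  have hn' : (0 : ℝ) < n := by exact_mod_cast hn
  have ht' : (0 : ℝ) < t := by exact_mod_cast ht
  have hC : (0 : ℝ) < C' := by exact_mod_cast hC'
  have hc0 : 0 ≤ c := by positivity
  have hsum : ∑ I ∈ B, ((I ∩ Vs).card : ℝ) ≤ (𝒲.card : ℝ) * c := by
    calc ∑ I ∈ B, ((I ∩ Vs).card : ℝ) ≤ ∑ _I ∈ B, c :=
          Finset.sum_le_sum fun I hI => (Finset.mem_filter.1 hI).2.le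
      _ = (B.card : ℝ) * c := by rw [Finset.sum_const, nsmul_eq_mul]
      _ ≤ (𝒲.card : ℝ) * c := by
          gcongr
          exact Finset.filter_subset _ _
  have hm : (m : ℝ) = α * n / t := by rw [eq_div_iff ht'.ne', hmt]
  have hbad : (𝒲.card : ℝ) * c = γ / (3 * α) * m / 4 := by
    rw [hcount, hc, hm]
    field_simp
    norm_num
  have hpos : 0 ≤ γ / (3 * α) * (m : ℝ) := by positivity
  linarith
end

section
/- For every integer r ≥ 2 there exist reals ε₀ > 0 and f > 0 and an integer t₀ such that the following holds for every integer t ≥ t₀. Let (A_j)_{j ∈ J} be a finite nonempty family (with repetitions allowed) of subsets of {1, …, t}, each of size at least 3t/4, and let I be a set of unordered pairs of elements of {1, …, t} with |I| ≤ ε₀ · t(t−1)/2. Then there exists an r-element subset S ⊆ {1, …, t} containing no pair from I such that at least f·|J| of the indices j ∈ J satisfy S ⊆ A_j. -/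
/-!
The proof is a first-moment count over sequences `x : Fin r → Fin t` instead of `r`-subsets.
Call a pair `(u, v)` bad if `u = v` or `s(u, v) ∈ I`; there are at most `t + 2|I|` bad pairs
(`card_badPairs_le`). A sequence is good if no two of its positions carry a bad pair, so the entries
of a good sequence form an `r`-set avoiding `I`. A union bound over pairs of positions
(`card_seq_pair_mem_le`) shows that at most `r² (t + 2|I|) t^(r-2)` sequences are not good, and this
is at most `½ (3/4)^r t^r` for small `ε₀` and large `t`. Since each `A j` contains all the
entries of at least `(3/4)^r t^r` sequences, it contains at least `½ (3/4)^r t^r` good ones.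
Double counting incidences between good sequences, of which there are at most `t^r`, and indices `j`
gives a good sequence lying in `A j` for at least `½ (3/4)^r |J|` indices.
-/

open Classical in
/-- The ordered pairs that two positions of a good sequence may not carry: the diagonal pairs and
both orderings of each pair in `I`. -/
noncomputable def badPairs {t : ℕ} (I : Finset (Sym2 (Fin t))) : Finset (Fin t × Fin t) :=
  Finset.univ.filter fun p => p.1 = p.2 ∨ s(p.1, p.2) ∈ I

lemma card_badPairs_le {t : ℕ} (I : Finset (Sym2 (Fin t))) :
    (badPairs I).card ≤ t + 2 * I.card := by
  classical
  unfold badPairs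
  rw [Finset.filter_or]
  refine (Finset.card_union_le _ _).trans (add_le_add ?_ ?_)
  · calc _ ≤ (Finset.univ.image fun a : Fin t => (a, a)).card := by
          apply Finset.card_le_card
          rintro ⟨a, b⟩ h
          simpa using h
      _ ≤ t := by simpa using Finset.card_image_le (s := Finset.univ) (f := fun a : Fin t => (a, a))
  · refine Finset.card_le_mul_card_image_of_maps_to (f := fun p : Fin t × Fin t => s(p.1, p.2))
      (fun p hp => (Finset.mem_filter.1 hp).2) 2 ?_
    intro e _
    induction e using Sym2.ind with
    | _ a b =>
      refine (Finset.card_le_card (t := {(a, b), (b, a)}) ?_).trans Finset.card_le_two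
      rintro ⟨c, d⟩ h
      simpa using (Finset.mem_filter.1 h).2

open Classical in
/-- A sequence is determined by its values at two distinct positions `i`, `k` and its restriction to
the remaining `r - 2` positions. -/
lemma card_seq_pair_mem_le {t r : ℕ} (B : Finset (Fin t × Fin t)) {i k : Fin r} (hik : i ≠ k) :
    (Finset.univ.filter fun x : Fin r → Fin t => (x i, x k) ∈ B).card ≤ B.card * t ^ (r - 2) := by
  have hc : (B ×ˢ (Finset.univ : Finset ((({i, k} : Finset (Fin r))ᶜ : Finset (Fin r)) → Fin t))).card
      = B.card * t ^ (r - 2) := by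
    rw [Finset.card_product, Finset.card_univ, Fintype.card_fun, Fintype.card_coe,
      Finset.card_compl, Finset.card_pair hik]
    simp
  rw [← hc]
  refine Finset.card_le_card_of_injOn (fun x => ((x i, x k), fun l => x l)) ?_ ?_
  · intro x hx
    simpa using hx
  · intro x _ y _ h
    simp only [Prod.mk.injEq] at h
    obtain ⟨⟨h1, h2⟩, h3⟩ := h
    funext l
    by_cases hl : l ∈ ({i, k} : Finset (Fin r))
    · rcases Finset.mem_insert.1 hl with rfl | hl
      · exact h1
      · rw [Finset.mem_singleton.1 hl]; exact h2
    · exact congrFun h3 ⟨l, Finset.mem_compl.2 hl⟩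

/-- Sequences no two of whose positions carry a bad pair; in particular they are injective. -/
def IsGood {t r : ℕ} (I : Finset (Sym2 (Fin t))) (x : Fin r → Fin t) : Prop :=
  ∀ i k, i ≠ k → (x i, x k) ∉ badPairs I

open Classical in
lemma card_not_isGood_le {t r : ℕ} (I : Finset (Sym2 (Fin t))) :
    (Finset.univ.filter fun x : Fin r → Fin t => ¬ IsGood I x).card
      ≤ r ^ 2 * ((t + 2 * I.card) * t ^ (r - 2)) := by
  calc _ ≤ ((Finset.univ.filter fun q : Fin r × Fin r => q.1 ≠ q.2).biUnion fun q =>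
          Finset.univ.filter fun x : Fin r → Fin t => (x q.1, x q.2) ∈ badPairs I).card := by
        apply Finset.card_le_card
        intro x hx
        simpa [IsGood] using hx
    _ ≤ (Finset.univ.filter fun q : Fin r × Fin r => q.1 ≠ q.2).card
          * ((t + 2 * I.card) * t ^ (r - 2)) := by
        refine Finset.card_biUnion_le_card_mul _ _ _ fun q hq => ?_
        exact (card_seq_pair_mem_le _ (Finset.mem_filter.1 hq).2).trans
          (Nat.mul_le_mul_right _ (card_badPairs_le I))
    _ ≤ _ := by
        refine Nat.mul_le_mul_right _ ((Finset.card_le_univ _).trans ?_)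
        simp [sq]


/-- **Finding a popular `r`-tuple avoiding few forbidden pairs.**
For every `r ≥ 2` there exist `ε₀ > 0`, `f > 0` and `t₀` such that for every `t ≥ t₀`:
given a finite nonempty family `(A_j)_{j ∈ J}` of subsets of `{1, …, t}`, each of size at
least `3t/4`, and a set `I` of unordered pairs of elements of `{1, …, t}` with
`|I| ≤ ε₀ t(t−1)/2`, there is an `r`-element set `S ⊆ {1, …, t}` containing no pair from
`I` such that at least `f|J|` of the indices `j` satisfy `S ⊆ A_j`. -/
theorem popular_tuple_avoiding_pairs (r : ℕ) (hr : 2 ≤ r) :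
    ∃ ε₀ f : ℝ, 0 < ε₀ ∧ 0 < f ∧ ∃ t₀ : ℕ, ∀ t : ℕ, t₀ ≤ t →
      ∀ (J : Type) [Fintype J] [Nonempty J] (A : J → Finset (Fin t)),
        (∀ j, 3 * (t : ℝ) / 4 ≤ ((A j).card : ℝ)) →
      ∀ I : Finset (Sym2 (Fin t)),
        (∀ e ∈ I, ¬ e.IsDiag) →
        (I.card : ℝ) ≤ ε₀ * ((t : ℝ) * ((t : ℝ) - 1) / 2) →
      ∃ S : Finset (Fin t), S.card = r ∧
        (∀ u ∈ S, ∀ v ∈ S, u ≠ v → s(u, v) ∉ I) ∧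
        f * (Fintype.card J : ℝ) ≤ (({j : J | S ⊆ A j}).ncard : ℝ) := by
  classical
  have hr0 : (0 : ℝ) < r := by exact_mod_cast (by omega : 0 < r)
  set f : ℝ := (3 / 4) ^ r / 2 with hf
  have hf0 : 0 < f := by positivity
  -- chosen so that `r² · 2c = f`, which is what the union bound costs
  set c : ℝ := f / (2 * r ^ 2) with hc
  have hc0 : 0 < c := by positivity
  refine ⟨c, f, hc0, hf0, ⌈1 / c⌉₊ + 1, ?_⟩
  intro t ht J _ _ A hA I _ hI
  have ht1 : (1 : ℝ) ≤ t := by exact_mod_cast (by omega : 1 ≤ t)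
  have htc : 1 ≤ c * t := by
    have h1 : 1 / c ≤ t := (Nat.le_ceil _).trans (by exact_mod_cast (by omega : ⌈1 / c⌉₊ ≤ t))
    rwa [div_le_iff₀' hc0] at h1
  have htr : (t : ℝ) ^ 2 * t ^ (r - 2) = t ^ r := by
    rw [← pow_add]; congr 1; omega
  have hbad : ((Finset.univ.filter fun x : Fin r → Fin t => ¬ IsGood I x).card : ℝ)
      ≤ f * t ^ r := by
    have h1 : ((Finset.univ.filter fun x : Fin r → Fin t => ¬ IsGood I x).card : ℝ)
        ≤ r ^ 2 * ((t + 2 * I.card) * t ^ (r - 2)) := by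
      exact_mod_cast card_not_isGood_le (r := r) I
    have h2 : (t : ℝ) + 2 * I.card ≤ 2 * c * t ^ 2 := by nlinarith
    calc _ ≤ _ := h1
      _ ≤ (r : ℝ) ^ 2 * ((2 * c * t ^ 2) * t ^ (r - 2)) := by gcongr
      _ = (r ^ 2 * (2 * c)) * (t ^ 2 * t ^ (r - 2)) := by ring
      _ = f * t ^ r := by rw [htr, hc]; field_simp
  set G : Finset (Fin r → Fin t) := Finset.univ.filter fun x => IsGood I x with hG
  have hgood : ∀ j, f * t ^ r ≤ ((G.filter fun x => ∀ i, x i ∈ A j).card : ℝ) := by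
    intro j
    have h1 : ((3 / 4 : ℝ) ^ r) * t ^ r ≤ ((Fintype.piFinset fun _ : Fin r => A j).card : ℝ) := by
      rw [Fintype.card_piFinset_const, ← mul_pow]
      push_cast
      have := hA j
      gcongr
      linarith
    have h2 : (Fintype.piFinset fun _ : Fin r => A j).card
        ≤ (G.filter fun x => ∀ i, x i ∈ A j).card
          + (Finset.univ.filter fun x : Fin r → Fin t => ¬ IsGood I x).card := by
      refine (Finset.card_le_card ?_).trans (Finset.card_union_le _ _)
      intro x hx
      have := Fintype.mem_piFinset.1 hx
      by_cases h : IsGood I x <;> simp [hG, h, this]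
    have h3 : ((Fintype.piFinset fun _ : Fin r => A j).card : ℝ)
        ≤ (G.filter fun x => ∀ i, x i ∈ A j).card
          + (Finset.univ.filter fun x : Fin r → Fin t => ¬ IsGood I x).card := by
      exact_mod_cast h2
    have h4 : ((3 / 4 : ℝ) ^ r) * t ^ r = f * t ^ r + f * t ^ r := by rw [hf]; ring
    linarith
  have hGne : G.Nonempty := by
    obtain ⟨j⟩ := ‹Nonempty J›
    have h1 : (0 : ℝ) < (G.filter fun x => ∀ i, x i ∈ A j).card :=
      lt_of_lt_of_le (by positivity) (hgood j)
    exact (Finset.card_pos.1 (by exact_mod_cast h1)).mono (Finset.filter_subset _ _)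
  have hGcard : (G.card : ℝ) ≤ t ^ r := by
    have : G.card ≤ t ^ r := (Finset.card_le_univ G).trans (by simp)
    exact_mod_cast this
  obtain ⟨x, hxG, hx⟩ : ∃ x ∈ G, f * (Fintype.card J : ℝ)
      ≤ ((Finset.univ.filter fun j : J => ∀ i, x i ∈ A j).card : ℝ) := by
    apply Finset.exists_le_of_sum_le hGne
    have hdc : ∑ x ∈ G, (Finset.univ.filter fun j : J => ∀ i, x i ∈ A j).card
        = ∑ j : J, (G.filter fun x => ∀ i, x i ∈ A j).card :=
      Finset.sum_card_bipartiteAbove_eq_sum_card_bipartiteBelow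
        (fun (x : Fin r → Fin t) (j : J) => ∀ i, x i ∈ A j)
    calc ∑ _x ∈ G, f * (Fintype.card J : ℝ) = G.card * (f * Fintype.card J) := by simp
      _ ≤ t ^ r * (f * Fintype.card J) := by gcongr
      _ = ∑ _j : J, f * (t : ℝ) ^ r := by simp; ring
      _ ≤ ∑ j : J, ((G.filter fun x => ∀ i, x i ∈ A j).card : ℝ) :=
        Finset.sum_le_sum fun j _ => hgood j
      _ = _ := by exact_mod_cast hdc.symm
  have hxg : IsGood I x := (Finset.mem_filter.1 hxG).2
  have hpair : ∀ i k, i ≠ k → x i ≠ x k ∧ s(x i, x k) ∉ I := by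
    intro i k hik
    simpa [badPairs] using hxg i k hik
  have hinj : Function.Injective x := fun i k h => by
    by_contra hik
    exact (hpair i k hik).1 h
  refine ⟨Finset.univ.image x, ?_, ?_, ?_⟩
  · simp [Finset.card_image_of_injective _ hinj]
  · intro u hu v hv huv
    obtain ⟨i, -, rfl⟩ := Finset.mem_image.1 hu
    obtain ⟨k, -, rfl⟩ := Finset.mem_image.1 hv
    exact (hpair i k fun h => huv (h ▸ rfl)).2
  · convert hx using 2
    rw [← Set.ncard_coe_finset]
    congr 1
    ext j
    simp [Finset.image_subset_iff]
end
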